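/- Let m ≥ 2 be an integer and let l̃ be the Lawlor neck profile curve. Then for every s ∈ (−π/(2(m−1)), π/(2(m−1))): (i) l̃(s)^{m−1} = 1 + i·tan((m−1)s), so in particular Re(l̃(s)^{m−1}) = 1; (ii) l̃'(s)·l̃(s)^{m−2} = i / cos²((m−1)s), which is purely imaginary with positive imaginary part. Consequently arg(l̃'(s)) + (m−2)·arg(l̃(s)) ≡ π/2 is constant, i.e. l̃ satisfies the scalar form of the special Lagrangian profile-curve equation κ⃗_γ − (m−2)γ^⊥/|γ|² = 0 (the case a = 0). -/

import Mathlib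

open Complex Real

/-- The Lawlor neck profile curve
`l̃(s) = (cos((m−1)s))^{−1/(m−1)}·e^{is}` on `(−π/(2(m−1)), π/(2(m−1)))`. -/
noncomputable def lawlor (m : ℕ) (s : ℝ) : ℂ :=
  ((Real.cos (((m : ℝ) - 1) * s) ^ (-(1 : ℝ) / ((m : ℝ) - 1)) : ℝ) : ℂ)
    * Complex.exp ((s : ℂ) * Complex.I)

/-!
Raising `l̃` to the power `m - 1` cancels the root, leaving `e^{iθ} / cos θ = 1 + i tan θ` with
`θ = (m - 1)s`. Differentiating this identity and dividing by `m - 1` gives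
`l̃' · l̃^{m-2} = i / cos² θ`, a positive multiple of `i`, whose argument is `π / 2`.
-/

theorem cos_mul_pos_of_mem_Ioo {a s : ℝ} (ha : 0 < a)
    (hs : s ∈ Set.Ioo (-(π / (2 * a))) (π / (2 * a))) : 0 < Real.cos (a * s) := by
  have endpoint : a * (π / (2 * a)) = π / 2 := by field_simp
  apply Real.cos_pos_of_mem_Ioo
  constructor
  · linarith [mul_lt_mul_of_pos_left hs.1 ha]
  · linarith [mul_lt_mul_of_pos_left hs.2 ha]

theorem inv_cos_mul_exp_mul_I {θ : ℝ} (hθ : Real.cos θ ≠ 0) :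
    ((Real.cos θ)⁻¹ : ℂ) * Complex.exp (θ * I) = 1 + (Real.tan θ : ℂ) * I := by
  have hθ' : (Real.cos θ : ℂ) ≠ 0 := ofReal_ne_zero.mpr hθ
  rw [exp_mul_I, ← ofReal_cos, ← ofReal_sin, Real.tan_eq_sin_div_cos, ofReal_div]
  field_simp

theorem hasDerivAt_one_add_tan_mul_I {a s : ℝ} (hs : Real.cos (a * s) ≠ 0) :
    HasDerivAt (fun t : ℝ ↦ 1 + (Real.tan (a * t) : ℂ) * I)
      (a * (I / ((Real.cos (a * s) ^ 2 : ℝ) : ℂ))) s := by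
  have htan : HasDerivAt (fun t : ℝ ↦ Real.tan (a * t)) (1 / Real.cos (a * s) ^ 2 * a) s :=
    (Real.hasDerivAt_tan hs).comp s (hasDerivAt_const_mul a)
  refine ((htan.ofReal_comp.mul_const I).const_add 1).congr_deriv ?_
  push_cast
  ring

theorem exists_int_arg_add_natCast_mul_arg_eq {z w : ℂ} {n : ℕ} (h : z * w ^ n ≠ 0) :
    ∃ k : ℤ, arg z + n * arg w = arg (z * w ^ n) + 2 * π * k := by
  have hangle : ((arg z + n * arg w : ℝ) : Real.Angle) = arg (z * w ^ n) := by
    rw [arg_mul_coe_angle (left_ne_zero_of_mul h) (right_ne_zero_of_mul h), arg_pow_coe_angle,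
      ← Real.Angle.natCast_mul_eq_nsmul, ← Real.Angle.coe_add]
  obtain ⟨k, hk⟩ := Real.Angle.angle_eq_iff_two_pi_dvd_sub.mp hangle
  exact ⟨k, by linarith⟩

theorem lawlor_pow_sub_one {m : ℕ} (hm : 2 ≤ m) {s : ℝ}
    (hs : 0 < Real.cos (((m : ℝ) - 1) * s)) :
    lawlor m s ^ (m - 1) = 1 + (Real.tan (((m : ℝ) - 1) * s) : ℂ) * I := by
  have hcast : ((m - 1 : ℕ) : ℝ) = (m : ℝ) - 1 := Nat.cast_pred (by lia)
  have hne : (m : ℝ) - 1 ≠ 0 := by rw [← hcast]; exact_mod_cast (by lia : m - 1 ≠ 0)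
  have modulus_pow : (Real.cos (((m : ℝ) - 1) * s) ^ (-(1 : ℝ) / ((m : ℝ) - 1))) ^ (m - 1)
      = (Real.cos (((m : ℝ) - 1) * s))⁻¹ := by
    rw [← Real.rpow_mul_natCast hs.le, hcast, div_mul_cancel₀ _ hne, Real.rpow_neg_one]
  have phase_pow : Complex.exp (s * I) ^ (m - 1)
      = Complex.exp ((((m : ℝ) - 1) * s : ℝ) * I) := by
    rw [← Complex.exp_nat_mul, ← hcast]
    push_cast
    ring_nf
  rw [lawlor, mul_pow, ← ofReal_pow, modulus_pow, phase_pow, ofReal_inv,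
    inv_cos_mul_exp_mul_I hs.ne']

theorem differentiableAt_lawlor {m : ℕ} {s : ℝ} (hs : Real.cos (((m : ℝ) - 1) * s) ≠ 0) :
    DifferentiableAt ℝ (lawlor m) s := by
  have modulus : DifferentiableAt ℝ
      (fun t : ℝ ↦ Real.cos (((m : ℝ) - 1) * t) ^ (-(1 : ℝ) / ((m : ℝ) - 1))) s :=
    DifferentiableAt.rpow_const (by fun_prop) (Or.inl hs)
  have phase : DifferentiableAt ℝ (fun t : ℝ ↦ Complex.exp (t * I)) s :=
    (ofRealCLM.differentiableAt.mul_const I).cexp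
  exact modulus.hasDerivAt.ofReal_comp.differentiableAt.mul phase

theorem deriv_lawlor_mul_pow_sub_two {m : ℕ} (hm : 2 ≤ m) {s : ℝ}
    (hs : 0 < Real.cos (((m : ℝ) - 1) * s)) :
    deriv (lawlor m) s * lawlor m s ^ (m - 2)
      = I / ((Real.cos (((m : ℝ) - 1) * s) ^ 2 : ℝ) : ℂ) := by
  have hcast : ((m - 1 : ℕ) : ℂ) = (((m : ℝ) - 1 : ℝ) : ℂ) := by
    rw [Nat.cast_pred (by lia)]
    push_cast
    rfl
  have cos_pos_nhds : ∀ᶠ t in nhds s, 0 < Real.cos (((m : ℝ) - 1) * t) :=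
    Filter.Tendsto.eventually_const_lt hs (ContinuousAt.tendsto (by fun_prop))
  have pow_eq_nhds : (fun t ↦ lawlor m t ^ (m - 1)) =ᶠ[nhds s]
      fun t ↦ 1 + (Real.tan (((m : ℝ) - 1) * t) : ℂ) * I :=
    cos_pos_nhds.mono fun _ ht ↦ lawlor_pow_sub_one hm ht
  apply mul_left_cancel₀ (Nat.cast_ne_zero.mpr (by lia) : ((m - 1 : ℕ) : ℂ) ≠ 0)
  calc ((m - 1 : ℕ) : ℂ) * (deriv (lawlor m) s * lawlor m s ^ (m - 2))
      = deriv (fun t ↦ lawlor m t ^ (m - 1)) s := by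
        rw [deriv_fun_pow (differentiableAt_lawlor hs.ne'), Nat.sub_sub]
        ring
    _ = deriv (fun t : ℝ ↦ 1 + (Real.tan (((m : ℝ) - 1) * t) : ℂ) * I) s :=
        pow_eq_nhds.deriv_eq
    _ = ((m - 1 : ℕ) : ℂ) * (I / ((Real.cos (((m : ℝ) - 1) * s) ^ 2 : ℝ) : ℂ)) := by
        rw [hcast, (hasDerivAt_one_add_tan_mul_I hs.ne').deriv]

/-- For the Lawlor neck profile curve `l̃`:
(i) `l̃(s)^{m−1} = 1 + i·tan((m−1)s)`, so `Re(l̃(s)^{m−1}) = 1`;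
(ii) `l̃'(s)·l̃(s)^{m−2} = i/cos²((m−1)s)`, purely imaginary with positive imaginary
part; consequently `arg(l̃'(s)) + (m−2)·arg(l̃(s)) ≡ π/2 (mod 2π)`, i.e. `l̃` satisfies
the scalar form of the special Lagrangian profile-curve equation (case `a = 0`). -/
theorem lawlor_profile_curve
    (m : ℕ) (hm : 2 ≤ m) (s : ℝ)
    (hs : s ∈ Set.Ioo (-(π / (2 * ((m : ℝ) - 1)))) (π / (2 * ((m : ℝ) - 1)))) :
    lawlor m s ^ (m - 1) = 1 + (Real.tan (((m : ℝ) - 1) * s) : ℂ) * Complex.I ∧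
    (lawlor m s ^ (m - 1)).re = 1 ∧
    deriv (lawlor m) s * lawlor m s ^ (m - 2)
      = Complex.I / ((Real.cos (((m : ℝ) - 1) * s) ^ 2 : ℝ) : ℂ) ∧
    (deriv (lawlor m) s * lawlor m s ^ (m - 2)).re = 0 ∧
    0 < (deriv (lawlor m) s * lawlor m s ^ (m - 2)).im ∧
    ∃ k : ℤ, Complex.arg (deriv (lawlor m) s) + ((m : ℝ) - 2) * Complex.arg (lawlor m s)
      = π / 2 + 2 * π * k := by
  have hm_pos : 0 < (m : ℝ) - 1 := sub_pos.mpr (by exact_mod_cast hm)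
  have hcos : 0 < Real.cos (((m : ℝ) - 1) * s) := cos_mul_pos_of_mem_Ioo hm_pos hs
  have hpow := lawlor_pow_sub_one hm hcos
  have hderiv := deriv_lawlor_mul_pow_sub_two hm hcos
  have hre : (deriv (lawlor m) s * lawlor m s ^ (m - 2)).re = 0 := by
    rw [hderiv, div_ofReal_re, I_re, zero_div]
  have him : 0 < (deriv (lawlor m) s * lawlor m s ^ (m - 2)).im := by
    rw [hderiv, div_ofReal_im, I_im]
    positivity
  refine ⟨hpow, ?_, hderiv, hre, him, ?_⟩
  · rw [hpow, add_re, one_re, re_ofReal_mul, I_re, mul_zero, add_zero]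
  · have hne : deriv (lawlor m) s * lawlor m s ^ (m - 2) ≠ 0 := fun h ↦ by simp [h] at him
    have harg := exists_int_arg_add_natCast_mul_arg_eq hne
    rwa [arg_eq_pi_div_two_iff.mpr ⟨hre, him⟩, Nat.cast_sub hm, Nat.cast_ofNat] at harg
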